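/- Let E, F be finite sets of variables, x ∈ E, y ∈ F, and S, K ∈ ℕ. Then A(E, x, S) ≤_T A(F, y, K) if and only if F ⊆ E, x = y, and S ≤ K. -/

import Mathlib

/-- The impredicative maximum on natural numbers. -/
def imaxN : ℕ → ℕ → ℕ
  | _, 0 => 0
  | i, (j+1) => max i (j+1)

/-- Sublevels A(E,x,S) and B(E,S). -/
inductive SubLvl where
  | A : Finset ℕ → ℕ → ℕ → SubLvl
  | B : Finset ℕ → ℕ → SubLvl
deriving DecidableEq

/-- Value of a sublevel under a valuation. -/
def evalS (σ : ℕ → ℕ) : SubLvl → ℕ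
  | .A E x S => if ∃ y ∈ E, σ y = 0 then 0 else σ x + S
  | .B E S => if ∃ y ∈ E, σ y = 0 then 0 else S

/-- Wellformed sublevels. -/
def Wf : SubLvl → Prop
  | .A E x _ => x ∈ E
  | .B _ S => 0 < S

/-- Semantic comparison of sublevels. -/
def leT (u v : SubLvl) : Prop := ∀ σ : ℕ → ℕ, evalS σ u ≤ evalS σ v

theorem A_le_A_iff (E F : Finset ℕ) (x y : ℕ) (hx : x ∈ E) (hy : y ∈ F) (S K : ℕ) :
    leT (SubLvl.A E x S) (SubLvl.A F y K) ↔ F ⊆ E ∧ x = y ∧ S ≤ K := by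
  constructor
  · intro h
    refine ⟨?_, ?_, ?_⟩
    · intro z hz
      by_contra hzE
      have h1 := h (fun n => if n = z then 0 else 1)
      have hE : ¬ ∃ w ∈ E, (if w = z then 0 else 1) = 0 := by
        rintro ⟨w, hw, h0⟩
        by_cases hwz : w = z
        · exact hzE (hwz ▸ hw)
        · simp [hwz] at h0
      have hF : ∃ w ∈ F, (if w = z then 0 else 1) = 0 := ⟨z, hz, by simp⟩
      have hxz : x ≠ z := fun e => hzE (e ▸ hx)
      simp only [evalS, if_neg hE, if_pos hF, if_neg hxz] at h1
      omega
    · by_contra hxy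
      have h1 := h (fun n => if n = x then K + 2 else 1)
      have hG : ∀ G : Finset ℕ, ¬ ∃ w ∈ G, (if w = x then K + 2 else 1) = 0 := by
        rintro G ⟨w, _, h0⟩
        split_ifs at h0
      have hyx : y ≠ x := fun e => hxy e.symm
      simp only [evalS, if_neg (hG E), if_neg (hG F), if_neg hyx, if_true] at h1
      omega
    · have h1 := h (fun _ => 1)
      simpa [evalS] using h1
  · rintro ⟨hFE, rfl, hSK⟩ σ
    simp only [evalS]
    by_cases hE : ∃ w ∈ E, σ w = 0
    · rw [if_pos hE]
      exact Nat.zero_le _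
    · have hF : ¬ ∃ w ∈ F, σ w = 0 := fun ⟨w, hw, h0⟩ => hE ⟨w, hFE hw, h0⟩
      rw [if_neg hE, if_neg hF]
      omega
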